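/- Let L be a positive integer and let u, v ∈ ℝⁿ be nonzero unit vectors all of whose squared entries are integer multiples of 1/L, with expanded supports Ū and V̄ in {1,...,n}×{1,...,L}. Let (h(ℓ))_{ℓ∈{1,...,n}×{1,...,L}} be independent random variables, each uniformly distributed on [0,1]. Let ℓ_U and ℓ_V be the (almost surely unique) minimizers of h over Ū and over V̄, with block indices j_U and j_V, and define Z = 1[h(ℓ_U) = h(ℓ_V)] · u[j_U]·v[j_V] / min(u[j_U]², v[j_V]²). Then E[Z²] = (∑_{j : u[j]≠0, v[j]≠0} max(u[j]², v[j]²)) / M, and consequently Var[Z] ≤ (∑_{j : u[j]≠0, v[j]≠0} max(u[j]², v[j]²)) / M, where M = ∑_{j=1}^{n} max(u[j]², v[j]²). -/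

import Mathlib

open MeasureTheory Finset
open scoped ENNReal

/-- The product measure on `J → ℝ` in which each coordinate is an independent
uniform random variable on `[0,1]`: a uniform hash family on `J`. -/
noncomputable def uniformHash (J : Type*) [Fintype J] : Measure (J → ℝ) :=
  Measure.pi fun _ : J => (volume : Measure ℝ).restrict (Set.Icc 0 1)

/-- A minimizer of `f` over the nonempty finite set `s` (the minimizer of a uniform
hash family over a nonempty set is almost surely unique). -/
noncomputable def argminOn {α : Type*} (s : Finset α) (hs : s.Nonempty) (f : α → ℝ) : α :=
  (s.exists_min_image f hs).choose

/-- The expanded support of a vector `u` with discretization parameter `L`: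
`Ū = {(i,k) ∈ {1,...,n} × {1,...,L} : k ≤ u[i]² ⬝ L}`, so that the block
`{i} × {1,...,L}` contributes exactly `u[i]² ⬝ L` elements when `u[i]²` is an
integer multiple of `1/L`.  (Here `Fin L` represents `{1,...,L}` via `k ↦ k+1`.) -/
noncomputable def expandedSupport {n : ℕ} (L : ℕ) (u : Fin n → ℝ) :
    Finset (Fin n × Fin L) :=
  Finset.univ.filter fun p => ((p.2 : ℕ) + 1 : ℝ) ≤ (u p.1) ^ 2 * L

/-- The weighted MinHash random variable
`Z = 1[h(ℓ_U) = h(ℓ_V)] ⬝ u[j_U] v[j_V] / min(u[j_U]², v[j_V]²)`, where `ℓ_U`, `ℓ_V` are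
the minimizers of the hash `h` over the expanded supports `Ū`, `V̄`, with block indices
`j_U = ℓ_U.1`, `j_V = ℓ_V.1`. -/
noncomputable def Zw {n L : ℕ} (u v : Fin n → ℝ)
    (hU : (expandedSupport L u).Nonempty) (hV : (expandedSupport L v).Nonempty)
    (h : Fin n × Fin L → ℝ) : ℝ :=
  (if h (argminOn (expandedSupport L u) hU h) = h (argminOn (expandedSupport L v) hV h)
      then (1 : ℝ) else 0) *
    (u (argminOn (expandedSupport L u) hU h).1 * v (argminOn (expandedSupport L v) hV h).1 /
      min ((u (argminOn (expandedSupport L u) hU h).1) ^ 2)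
        ((v (argminOn (expandedSupport L v) hV h).1) ^ 2))

theorem wmh_argmin_mem {α : Type*} (s : Finset α) (hs : s.Nonempty) (f : α → ℝ) :
    argminOn s hs f ∈ s := (s.exists_min_image f hs).choose_spec.1

theorem wmh_argmin_le {α : Type*} (s : Finset α) (hs : s.Nonempty) (f : α → ℝ) :
    ∀ k ∈ s, f (argminOn s hs f) ≤ f k := (s.exists_min_image f hs).choose_spec.2

theorem wmh_argmin_eq {α : Type*} (s : Finset α) (hs : s.Nonempty) (f : α → ℝ)
    (hf : Function.Injective f) (l : α) (hl : l ∈ s) (h : ∀ k ∈ s, f l ≤ f k) :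
    argminOn s hs f = l :=
  hf (le_antisymm (wmh_argmin_le s hs f l hl) (h _ (wmh_argmin_mem s hs f)))

theorem wmh_hash_eq (J : Type*) [Fintype J] :
    uniformHash J = (volume : Measure (J → ℝ)).restrict (Set.univ.pi fun _ => Set.Icc 0 1) := by
  unfold uniformHash
  rw [volume_pi, Measure.restrict_pi_pi]

instance wmh_prob (J : Type*) [Fintype J] : IsProbabilityMeasure (uniformHash J) := by
  unfold uniformHash
  haveI : IsProbabilityMeasure ((volume : Measure ℝ).restrict (Set.Icc 0 1)) := ⟨by simp⟩
  infer_instance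

theorem wmh_ae_ne {J : Type*} [Fintype J] (a b : J) (hab : a ≠ b) :
    ∀ᵐ h ∂(uniformHash J), h a ≠ h b := by
  classical
  rw [wmh_hash_eq]
  apply ae_restrict_of_ae
  have := Measure.addHaar_submodule (volume : Measure (J → ℝ))
    (LinearMap.ker (LinearMap.proj (R := ℝ) (φ := fun _ : J => ℝ) a - LinearMap.proj b)) (by
      intro h
      have h1 : (Pi.single a 1 : J → ℝ) ∈ (⊤ : Submodule ℝ (J → ℝ)) := trivial
      rw [← h] at h1
      simp [LinearMap.mem_ker, hab, hab.symm] at h1)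
  rw [ae_iff]
  convert this using 2
  ext h
  simp [LinearMap.mem_ker, sub_eq_zero]

theorem wmh_ae_inj (J : Type*) [Fintype J] :
    ∀ᵐ h ∂(uniformHash J), Function.Injective h := by
  have : ∀ᵐ h ∂(uniformHash J), ∀ a b : J, a ≠ b → h a ≠ h b := by
    rw [ae_all_iff]; intro a
    rw [ae_all_iff]; intro b
    by_cases hab : a = b
    · simp [hab]
    · filter_upwards [wmh_ae_ne a b hab] with h hh _ using hh
  filter_upwards [this] with h hh a b hab
  by_contra hne
  exact hh a b hne hab

def wmhE {J : Type*} (W : Finset J) (l : J) : Set (J → ℝ) := {h | ∀ k ∈ W, h l ≤ h k}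

theorem wmhE_meas {J : Type*} [Fintype J] (W : Finset J) (l : J) :
    MeasurableSet (wmhE W l) := by
  have : wmhE W l = ⋂ k ∈ W, {h : J → ℝ | h l ≤ h k} := by ext; simp [wmhE]
  rw [this]
  exact Finset.measurableSet_biInter _ fun k _ =>
    measurableSet_le (measurable_pi_apply l) (measurable_pi_apply k)

theorem wmhE_symm {J : Type*} [Fintype J] [DecidableEq J] (W : Finset J) (a b : J)
    (ha : a ∈ W) (hb : b ∈ W) :
    (uniformHash J) (wmhE W a) = (uniformHash J) (wmhE W b) := by
  have hmp : MeasurePreserving (fun h : J → ℝ => h ∘ Equiv.swap a b)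
      (uniformHash J) (uniformHash J) := by
    have := measurePreserving_piCongrLeft
      (fun _ : J => (volume : Measure ℝ).restrict (Set.Icc 0 1)) (Equiv.swap a b)
    unfold uniformHash
    convert this using 1
    ext h j
    obtain ⟨i, rfl⟩ := (Equiv.swap a b).surjective j
    rw [MeasurableEquiv.coe_piCongrLeft]
    erw [Equiv.piCongrLeft_apply_apply]
    simp
  rw [← hmp.measure_preimage (wmhE_meas W b).nullMeasurableSet]
  congr 1
  have hW : ∀ k, Equiv.swap a b k ∈ W ↔ k ∈ W := by
    intro k
    rw [Equiv.swap_apply_def]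
    split_ifs with h1 h2
    · simp [h1, ha, hb]
    · simp [h2, ha, hb]
    · rfl
  ext h
  simp only [wmhE, Set.mem_setOf_eq, Set.mem_preimage, Function.comp, Equiv.swap_apply_right]
  constructor
  · intro hh k hk
    exact hh _ ((hW k).2 hk)
  · intro hh k hk
    have := hh _ ((hW k).2 hk)
    simpa using this

theorem wmh_exists {J : Type*} (W : Finset J) (hW : W.Nonempty) (h : J → ℝ)
    (hh : Function.Injective h) : ∃ l ∈ W, ∀ k ∈ W, h ∈ wmhE W k ↔ k = l := by
  obtain ⟨l, hl, hm⟩ := W.exists_min_image h hW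
  refine ⟨l, hl, fun k hk => ⟨fun h1 => hh (le_antisymm (h1 l hl) (hm k hk)), ?_⟩⟩
  rintro rfl
  exact hm

theorem wmhE_prob {J : Type*} [Fintype J] [DecidableEq J] (W : Finset J) (a : J)
    (ha : a ∈ W) : (uniformHash J).real (wmhE W a) = 1 / W.card := by
  have h1 : ∫ h, ∑ l ∈ W, (wmhE W l).indicator (fun _ => (1 : ℝ)) h ∂(uniformHash J) = 1 := by
    have : ∀ᵐ h ∂(uniformHash J),
        ∑ l ∈ W, (wmhE W l).indicator (fun _ => (1 : ℝ)) h = 1 := by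
      filter_upwards [wmh_ae_inj J] with h hh
      obtain ⟨l, hl, hk⟩ := wmh_exists W ⟨a, ha⟩ h hh
      rw [Finset.sum_eq_single_of_mem l hl]
      · simp [(hk l hl).2 rfl]
      · intro k hkW hne
        simp [hk k hkW, hne]
    rw [integral_congr_ae this]
    simp
  rw [integral_finset_sum _ (fun l _ =>
    (integrable_const (1 : ℝ)).indicator (wmhE_meas W l))] at h1
  have h2 : ∀ l ∈ W, ∫ h, (wmhE W l).indicator (fun _ => (1 : ℝ)) h ∂(uniformHash J)
      = (uniformHash J).real (wmhE W a) := by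
    intro l hl
    rw [integral_indicator (wmhE_meas W l)]
    simp [Measure.real, wmhE_symm W l a hl ha]
  rw [Finset.sum_congr rfl h2, Finset.sum_const, nsmul_eq_mul] at h1
  have : (W.card : ℝ) ≠ 0 := by
    simp [Finset.card_eq_zero, Finset.ne_empty_of_mem ha]
  field_simp
  linarith

theorem wmh_count {n : ℕ} (L : ℕ) (hL : 0 < L) (w f : Fin n → ℝ) (h0 : ∀ i, 0 ≤ w i)
    (h1 : ∀ i, w i ≤ 1) (hk : ∀ i, ∃ k : ℤ, w i = (k : ℝ) / L) :
    ∑ p ∈ (Finset.univ.filter fun p : Fin n × Fin L => ((p.2 : ℕ) + 1 : ℝ) ≤ w p.1 * L), f p.1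
      = L * ∑ j, f j * w j := by
  have hL' : (0 : ℝ) < L := by exact_mod_cast hL
  rw [Finset.sum_filter, Fintype.sum_prod_type, Finset.mul_sum]
  refine Finset.sum_congr rfl fun j _ => ?_
  obtain ⟨k, hk⟩ := hk j
  have hwL : w j * L = k := by rw [hk]; field_simp
  have hk0 : 0 ≤ k := by
    have := mul_nonneg (h0 j) hL'.le
    rw [hwL] at this; exact_mod_cast this
  obtain ⟨m, rfl⟩ := Int.eq_ofNat_of_zero_le hk0
  have hmL : m ≤ L := by
    have := mul_le_mul_of_nonneg_right (h1 j) hL'.le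
    rw [hwL] at this
    have h3 : (m : ℝ) ≤ L := by simpa using this
    exact_mod_cast h3
  have hwL' : w j * L = (m : ℝ) := by simpa using hwL
  simp only [hwL']
  rw [← Finset.sum_filter, Finset.sum_const, nsmul_eq_mul]
  have hc : (Finset.univ.filter fun x : Fin L => ((x : ℕ) + 1 : ℝ) ≤ m).card = m := by
    have : (Finset.univ.filter fun x : Fin L => ((x : ℕ) + 1 : ℝ) ≤ m)
        = Finset.univ.filter fun x : Fin L => (x : ℕ) < m := by
      ext x
      simp only [Finset.mem_filter, Finset.mem_univ, true_and]
      rw [← Nat.succ_le_iff]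
      norm_cast
    rw [this, Fin.card_filter_val_lt]
    omega
  rw [hc, ← hwL']
  ring

theorem wmh_pointwise {n L : ℕ} (u v : Fin n → ℝ)
    (hU : (expandedSupport L u).Nonempty) (hV : (expandedSupport L v).Nonempty)
    (h : Fin n × Fin L → ℝ) (hh : Function.Injective h) (g : ℝ → ℝ) (hg : g 0 = 0) :
    g (Zw u v hU hV h) = ∑ l ∈ expandedSupport L u ∩ expandedSupport L v,
      (wmhE (expandedSupport L u ∪ expandedSupport L v) l).indicator
        (fun _ => g (u l.1 * v l.1 / min ((u l.1) ^ 2) ((v l.1) ^ 2))) h := by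
  set U := expandedSupport L u with hUd
  set V := expandedSupport L v with hVd
  obtain ⟨l, hl, hk⟩ := wmh_exists (U ∪ V) (hU.mono Finset.subset_union_left) h hh
  have hlm : h ∈ wmhE (U ∪ V) l := (hk l hl).2 rfl
  by_cases hI : l ∈ U ∩ V
  · rw [Finset.sum_eq_single_of_mem l hI]
    · have hu := wmh_argmin_eq U hU h hh l (Finset.mem_inter.1 hI).1
        (fun k hkU => hlm k (Finset.mem_union_left _ hkU))
      have hv := wmh_argmin_eq V hV h hh l (Finset.mem_inter.1 hI).2
        (fun k hkU => hlm k (Finset.mem_union_right _ hkU))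
      rw [Set.indicator_of_mem hlm]
      unfold Zw
      have hu' : argminOn (expandedSupport L u) hU h = l := hu
      have hv' : argminOn (expandedSupport L v) hV h = l := hv
      simp only [hu', hv', if_true, one_mul]
    · intro k hkI hne
      rw [Set.indicator_of_notMem]
      rw [hk k (Finset.mem_union_left _ (Finset.mem_inter.1 hkI).1)]
      exact hne
  · rw [Finset.sum_eq_zero]
    · unfold Zw
      rw [if_neg, zero_mul, hg]
      intro heq
      have heq : argminOn U hU h = argminOn V hV h := hh heq
      apply hI
      rcases Finset.mem_union.1 hl with h1 | h1
      · have hu := wmh_argmin_eq U hU h hh l h1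
          (fun k hkU => hlm k (Finset.mem_union_left _ hkU))
        exact Finset.mem_inter.2 ⟨h1, by rw [← hu, heq]; exact wmh_argmin_mem _ _ _⟩
      · have hv := wmh_argmin_eq V hV h hh l h1
          (fun k hkU => hlm k (Finset.mem_union_right _ hkU))
        exact Finset.mem_inter.2 ⟨by rw [← hv, ← heq]; exact wmh_argmin_mem _ _ _, h1⟩
    · intro k hkI
      rw [Set.indicator_of_notMem]
      rw [hk k (Finset.mem_union_left _ (Finset.mem_inter.1 hkI).1)]
      rintro rfl
      exact hI hkI

/-- For nonzero unit vectors `u, v` with squared entries integer multiples of `1/L` and a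
uniform hash family on `{1,...,n} × {1,...,L}`, the weighted MinHash random variable `Z`
satisfies `E[Z²] = (∑_{j : u j ≠ 0, v j ≠ 0} max(u[j]², v[j]²)) / M` and consequently
`Var[Z] ≤ (∑_{j : u j ≠ 0, v j ≠ 0} max(u[j]², v[j]²)) / M`,
where `M = ∑ⱼ max(u[j]², v[j]²)`. -/
theorem weighted_minhash_second_moment {n : ℕ} (L : ℕ) (hL : 0 < L)
    (u v : Fin n → ℝ) (hu0 : u ≠ 0) (hv0 : v ≠ 0)
    (hu1 : ∑ i, (u i) ^ 2 = 1) (hv1 : ∑ i, (v i) ^ 2 = 1)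
    (hu : ∀ i, ∃ k : ℤ, (u i) ^ 2 = (k : ℝ) / L)
    (hv : ∀ i, ∃ k : ℤ, (v i) ^ 2 = (k : ℝ) / L)
    (hU : (expandedSupport L u).Nonempty) (hV : (expandedSupport L v).Nonempty) :
    (∫ h, (Zw u v hU hV h) ^ 2 ∂(uniformHash (Fin n × Fin L))
        = (∑ j ∈ Finset.univ.filter (fun j => u j ≠ 0 ∧ v j ≠ 0),
              max ((u j) ^ 2) ((v j) ^ 2)) / (∑ j, max ((u j) ^ 2) ((v j) ^ 2)))
    ∧ ProbabilityTheory.variance (Zw u v hU hV) (uniformHash (Fin n × Fin L))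
        ≤ (∑ j ∈ Finset.univ.filter (fun j => u j ≠ 0 ∧ v j ≠ 0),
              max ((u j) ^ 2) ((v j) ^ 2)) / (∑ j, max ((u j) ^ 2) ((v j) ^ 2)) := by
  have hL' : (0 : ℝ) < L := by exact_mod_cast hL
  have hle : ∀ w : Fin n → ℝ, ∑ i, (w i) ^ 2 = 1 → ∀ i, (w i) ^ 2 ≤ 1 := by
    intro w hw i
    rw [← hw]
    exact Finset.single_le_sum (f := fun i => (w i) ^ 2) (fun j _ => sq_nonneg _)
      (Finset.mem_univ i)
  have hI : expandedSupport L u ∩ expandedSupport L v = Finset.univ.filter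
      fun p : Fin n × Fin L => ((p.2 : ℕ) + 1 : ℝ) ≤ min ((u p.1) ^ 2) ((v p.1) ^ 2) * L := by
    ext p
    simp [expandedSupport, min_mul_of_nonneg _ _ hL'.le]
  have hW : expandedSupport L u ∪ expandedSupport L v = Finset.univ.filter
      fun p : Fin n × Fin L => ((p.2 : ℕ) + 1 : ℝ) ≤ max ((u p.1) ^ 2) ((v p.1) ^ 2) * L := by
    ext p
    simp [expandedSupport, max_mul_of_nonneg _ _ hL'.le]
  have hcard : ((expandedSupport L u ∪ expandedSupport L v).card : ℝ)
      = L * ∑ j, max ((u j) ^ 2) ((v j) ^ 2) := by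
    have := wmh_count L hL (fun j => max ((u j) ^ 2) ((v j) ^ 2)) (fun _ => 1)
      (fun i => le_max_of_le_left (sq_nonneg _))
      (fun i => max_le (hle u hu1 i) (hle v hv1 i))
      (fun i => by rcases max_choice ((u i) ^ 2) ((v i) ^ 2) with h | h <;> simp only [h, hu, hv])
    rw [hW]
    simpa using this
  have hint : ∫ h, (Zw u v hU hV h) ^ 2 ∂(uniformHash (Fin n × Fin L))
        = (∑ j ∈ Finset.univ.filter (fun j => u j ≠ 0 ∧ v j ≠ 0),
              max ((u j) ^ 2) ((v j) ^ 2)) / (∑ j, max ((u j) ^ 2) ((v j) ^ 2)) := by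
    have hae := (wmh_ae_inj (Fin n × Fin L)).mono
      (fun h hh => wmh_pointwise u v hU hV h hh (fun x => x ^ 2) (by simp))
    rw [integral_congr_ae hae, integral_finset_sum _ (fun l _ =>
      (integrable_const _).indicator (wmhE_meas _ l))]
    have h2 : ∀ l ∈ expandedSupport L u ∩ expandedSupport L v,
        ∫ h, (wmhE (expandedSupport L u ∪ expandedSupport L v) l).indicator
          (fun _ => (u l.1 * v l.1 / min ((u l.1) ^ 2) ((v l.1) ^ 2)) ^ 2) h
            ∂(uniformHash (Fin n × Fin L))
        = (u l.1 * v l.1 / min ((u l.1) ^ 2) ((v l.1) ^ 2)) ^ 2 *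
          (1 / (L * ∑ j, max ((u j) ^ 2) ((v j) ^ 2))) := by
      intro l hl
      rw [integral_indicator (wmhE_meas _ l), ← hcard,
        ← wmhE_prob _ l (Finset.mem_union_left _ (Finset.mem_inter.1 hl).1)]
      simp [Measure.real, mul_comm]
    rw [Finset.sum_congr rfl h2, ← Finset.sum_mul, hI,
      wmh_count L hL (fun j => min ((u j) ^ 2) ((v j) ^ 2))
        (fun j => (u j * v j / min ((u j) ^ 2) ((v j) ^ 2)) ^ 2)
      (fun i => le_min (sq_nonneg _) (sq_nonneg _))
      (fun i => min_le_of_left_le (hle u hu1 i))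
      (fun i => by rcases min_choice ((u i) ^ 2) ((v i) ^ 2) with h | h <;> simp only [h, hu, hv])]
    have h3 : ∑ j, (u j * v j / min ((u j) ^ 2) ((v j) ^ 2)) ^ 2 * min ((u j) ^ 2) ((v j) ^ 2)
        = ∑ j ∈ Finset.univ.filter (fun j => u j ≠ 0 ∧ v j ≠ 0),
              max ((u j) ^ 2) ((v j) ^ 2) := by
      rw [Finset.sum_filter]
      refine Finset.sum_congr rfl fun j _ => ?_
      split_ifs with hj
      · have hm : min ((u j) ^ 2) ((v j) ^ 2) ≠ 0 :=
          (lt_min (sq_pos_of_ne_zero hj.1) (sq_pos_of_ne_zero hj.2)).ne'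
        have hmm := min_mul_max ((u j) ^ 2) ((v j) ^ 2)
        field_simp
        linarith
      · have : u j * v j = 0 := by
          rw [mul_eq_zero]; tauto
        simp [this]
    rw [h3]
    field_simp
  refine ⟨hint, ?_⟩
  rw [← hint]
  have hae := (wmh_ae_inj (Fin n × Fin L)).mono
      (fun h hh => wmh_pointwise u v hU hV h hh (fun x => x) rfl)
  apply ProbabilityTheory.variance_le_expectation_sq
  refine AEStronglyMeasurable.congr ?_ (Filter.EventuallyEq.symm hae)
  refine Measurable.aestronglyMeasurable ?_
  exact Finset.measurable_fun_sum _ fun l _ => measurable_const.indicator (wmhE_meas _ l)
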